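/- In the chain-of-gadgets graph G of the previous statement, no two spanning trees T_1, T_2 can collectively 1-span G when the chain is sufficiently long: precisely, if the chain has at least 2·5^3+1 gadgets, then for any two spanning trees T_1,T_2 there exist vertices u,v of G with dist_{T_j}(u,v) > dist_G(u,v)+1 for both j=1,2. -/

import Mathlib

open SimpleGraph

/-- The chain of m gadgets, each gadget being K_5 minus the edge xy
(triangle vertices 1,2,3 and universal vertices x, y), chained by identifying
the y vertex of each gadget with the x vertex of the next. -/
def chainRel (m : ℕ) :
    (Fin (m + 1) ⊕ Fin m × Fin 3) → (Fin (m + 1) ⊕ Fin m × Fin 3) → Prop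
  | .inl a, .inr (g, _) => (a : ℕ) = (g : ℕ) ∨ (a : ℕ) = (g : ℕ) + 1
  | .inr (g, _), .inr (g', _) => g = g'
  | _, _ => False

def chainG (m : ℕ) : SimpleGraph (Fin (m + 1) ⊕ Fin m × Fin 3) :=
  SimpleGraph.fromRel (chainRel m)

/-!
Every junction `inl k` is a cut vertex, so in a spanning tree the distance between triangle vertices
of gadgets `a < c` is a sum of contributions of the gadgets `a, ..., c`, and each contribution is
at least the corresponding one in the chain. As a tree joins the two ends of a gadget by a path of
length two through at most one triangle vertex, each gadget has a triangle vertex `v` off these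
paths in both trees. Let `p`, `q` and `s` be the tree distances from entry to `v`, from `v` to exit
and from entry to exit. Then `p + q ≥ 3`, and, trees being bipartite, `p + q ≥ 4` if `s = 2`.
If three gadgets `a < b < c` agree on whether `s = 2` and on `p` (up to truncation), the surplus
`q - 1` at `a` and `p - 1` at `c` add up to at least `2` if `s = 2`, and to at least `1` if `s > 2`,
in which case crossing `b` costs another unit. Five types of gadget per tree have to be
distinguished, so `2 * 5 ^ 2 + 1` gadgets suffice.
-/

section Pigeonhole

lemma exists_lt_lt_map_eq_of_two_mul_card_lt_card {α β : Type*} [LinearOrder α] [Fintype α]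
    [Fintype β] (f : α → β) (h : 2 * Fintype.card β < Fintype.card α) :
    ∃ a b c, a < b ∧ b < c ∧ f a = f b ∧ f b = f c := by
  classical
  obtain ⟨y, hy⟩ := Fintype.exists_lt_card_fiber_of_mul_lt_card f (by rwa [mul_comm] at h)
  obtain ⟨t, ht, htcard⟩ := Finset.exists_subset_card_eq (Nat.succ_le_of_lt hy)
  let e := t.orderEmbOfFin htcard
  have he (i) : f (e i) = y := (Finset.mem_filter.1 (ht (t.orderEmbOfFin_mem htcard i))).2
  exact ⟨e 0, e 1, e 2, e.strictMono (by decide), e.strictMono (by decide),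
    (he 0).trans (he 1).symm, (he 1).trans (he 2).symm⟩

lemma exists_notMem_notMem_of_subsingleton {α : Type*} [Fintype α] (hα : 2 < Fintype.card α)
    {s t : Set α} (hs : s.Subsingleton) (ht : t.Subsingleton) : ∃ a, a ∉ s ∧ a ∉ t := by
  by_contra! hcover
  have hunion : s ∪ t = Set.univ := Set.eq_univ_of_forall fun a => or_iff_not_imp_left.2 (hcover a)
  have hcard : Fintype.card α ≤ 1 + 1 :=
    calc Fintype.card α = (s ∪ t).ncard := by
          rw [hunion, Set.ncard_univ, Nat.card_eq_fintype_card]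
      _ ≤ s.ncard + t.ncard := Set.ncard_union_le s t
      _ ≤ 1 + 1 := add_le_add (Set.ncard_le_one_iff_subsingleton.2 hs)
          (Set.ncard_le_one_iff_subsingleton.2 ht)
  omega

end Pigeonhole

section Distance

variable {V : Type*} {G : SimpleGraph V} {u v w : V}

lemma dist_eq_add_dist_of_forall_mem_support (hG : G.Connected)
    (hw : ∀ p : G.Walk u v, w ∈ p.support) : G.dist u v = G.dist u w + G.dist w v := by
  classical
  refine hG.dist_triangle.antisymm ?_
  obtain ⟨p, hp⟩ := hG.exists_walk_length_eq_dist u v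
  calc G.dist u w + G.dist w v
      ≤ (p.takeUntil w (hw p)).length + (p.dropUntil w (hw p)).length :=
        add_le_add (dist_le _) (dist_le _)
    _ = G.dist u v := by rw [← Walk.length_append, p.take_spec, hp]

lemma le_add_dist_of_forall_adj_le_add_one {f : V → ℕ}
    (hf : ∀ ⦃x y⦄, G.Adj x y → f y ≤ f x + 1) (hG : G.Connected) (u v : V) :
    f v ≤ f u + G.dist u v := by
  obtain ⟨p, hp⟩ := hG.exists_walk_length_eq_dist u v
  rw [← hp]
  clear hp
  induction p with
  | nil => simp
  | cons h p ih =>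
    have := hf h
    rw [Walk.length_cons]
    omega

lemma exists_mem_support_eq_of_forall_adj_le_add_one {f : V → ℕ}
    (hf : ∀ ⦃x y⦄, G.Adj x y → f y ≤ f x + 1) (p : G.Walk u v) {n : ℕ}
    (hu : f u ≤ n) (hv : n ≤ f v) : ∃ x ∈ p.support, f x = n := by
  induction p with
  | nil => exact ⟨_, by simp, hu.antisymm hv⟩
  | @cons x y z h p ih =>
    by_cases hy : f y ≤ n
    · obtain ⟨t, ht, hft⟩ := ih hy hv
      exact ⟨t, by simp [ht], hft⟩
    · have := hf h
      exact ⟨x, by simp, by omega⟩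

lemma even_dist_add_dist_add_dist_of_isBipartite (hG : G.Connected) (hbip : G.IsBipartite)
    (u v w : V) : Even (G.dist u v + G.dist v w + G.dist u w) := by
  obtain ⟨p, hp⟩ := hG.exists_walk_length_eq_dist u v
  obtain ⟨q, hq⟩ := hG.exists_walk_length_eq_dist v w
  obtain ⟨r, hr⟩ := hG.exists_walk_length_eq_dist u w
  obtain ⟨color⟩ := hbip
  have hclosed : Even ((p.append q).append r.reverse).length :=
    ((G.recolorOfEquiv finTwoEquiv color).even_length_iff_congr _).2 Iff.rfl
  rwa [Walk.length_append, Walk.length_append, Walk.length_reverse, hp, hq, hr] at hclosed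

lemma three_le_dist_add_dist_of_notMem_commonNeighbors (hG : G.Connected) (huw : u ≠ w)
    (hwv : w ≠ v) (hw : w ∉ G.commonNeighbors u v) : 3 ≤ G.dist u w + G.dist w v := by
  have hdist_uw := hG.pos_dist_of_ne huw
  have hdist_wv := hG.pos_dist_of_ne hwv
  rw [mem_commonNeighbors, G.adj_comm v, ← dist_eq_one_iff_adj, ← dist_eq_one_iff_adj] at hw
  omega

lemma four_le_dist_add_dist_of_notMem_commonNeighbors (hG : G.Connected) (hbip : G.IsBipartite)
    (huw : u ≠ w) (hwv : w ≠ v) (hw : w ∉ G.commonNeighbors u v) (huv : Even (G.dist u v)) :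
    4 ≤ G.dist u w + G.dist w v := by
  have hthree := three_le_dist_add_dist_of_notMem_commonNeighbors hG huw hwv hw
  have heven := even_dist_add_dist_add_dist_of_isBipartite hG hbip u w v
  rw [Nat.even_iff] at huv heven
  omega

lemma commonNeighbors_subsingleton_of_isAcyclic (hG : G.IsAcyclic) (huv : u ≠ v) :
    (G.commonNeighbors u v).Subsingleton := by
  rintro x ⟨hux, hvx⟩ y ⟨huy, hvy⟩
  have isPath {z : V} (huz : G.Adj u z) (hvz : G.Adj v z) :
      (Walk.cons huz (Walk.cons hvz.symm Walk.nil)).IsPath := by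
    simp [Walk.cons_isPath_iff, huz.ne, hvz.ne', huv]
  have hpaths := congrArg Subtype.val
    ((hG.subsingleton_path u v).elim ⟨_, isPath hux hvx⟩ ⟨_, isPath huy hvy⟩)
  exact congrArg Walk.snd hpaths

end Distance

/-- The vertices of the chain of `m` gadgets: `inl k` is the junction between gadgets `k - 1` and
`k`, and `inr (g, i)` is a triangle vertex of gadget `g`. -/
abbrev ChainVertex (m : ℕ) : Type := Fin (m + 1) ⊕ Fin m × Fin 3

namespace ChainVertex

variable {m : ℕ}

/-- The vertex `x` of gadget `g`. -/
abbrev entry (g : Fin m) : ChainVertex m := .inl g.castSucc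

/-- The vertex `y` of gadget `g`, shared with the next gadget as its `x`. -/
abbrev exit (g : Fin m) : ChainVertex m := .inl g.succ

/-- The `i`-th vertex of the triangle of gadget `g`. -/
abbrev corner (g : Fin m) (i : Fin 3) : ChainVertex m := .inr (g, i)

/-- The distance of a vertex from the left end of the chain, in the whole chain graph. -/
def pos : ChainVertex m → ℕ
  | .inl k => 2 * k
  | .inr (g, _) => 2 * g + 1

lemma eq_inl_of_pos_eq {u : ChainVertex m} {k : Fin (m + 1)} (hu : u.pos = 2 * k) :
    u = .inl k := by
  rcases u with j | ⟨g, i⟩ <;> simp only [pos] at hu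
  · congr 1
    omega
  · omega

lemma entry_ne_exit (g : Fin m) : entry g ≠ exit g := by
  simp [Fin.ext_iff]

end ChainVertex

open ChainVertex

namespace chainG

section Chain

variable {m : ℕ}

lemma adj_entry_corner (g : Fin m) (i : Fin 3) : (chainG m).Adj (entry g) (corner g i) := by
  simp [chainG, chainRel]

lemma adj_corner_exit (g : Fin m) (i : Fin 3) : (chainG m).Adj (corner g i) (exit g) := by
  simp [chainG, chainRel]

lemma pos_le_pos_add_one {u v : ChainVertex m} (h : (chainG m).Adj u v) :
    v.pos ≤ u.pos + 1 := by
  rcases u with j | ⟨g, i⟩ <;> rcases v with k | ⟨g', i'⟩ <;>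
    simp only [chainG, chainRel, fromRel_adj, pos] at h ⊢ <;> grind

lemma exists_walk_corner_corner_length_eq_two {a b : Fin m} (hab : (b : ℕ) = a + 1) (i k : Fin 3) :
    ∃ p : (chainG m).Walk (corner a i) (corner b k), p.length = 2 := by
  have hjunction : exit a = entry b := congrArg Sum.inl (Fin.ext (by simp [hab]))
  exact ⟨.cons (hjunction ▸ adj_corner_exit a i) (adj_entry_corner b k).toWalk, rfl⟩

lemma exists_walk_corner_corner_length_eq {a c : Fin m} {n : ℕ} (hac : (c : ℕ) = a + (n + 1))
    (i k : Fin 3) :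
    ∃ p : (chainG m).Walk (corner a i) (corner c k), p.length = 2 * (n + 1) := by
  induction n generalizing c k with
  | zero => exact exists_walk_corner_corner_length_eq_two hac i k
  | succ n ih =>
    let b : Fin m := ⟨a + (n + 1), by omega⟩
    obtain ⟨p, hp⟩ := ih (c := b) rfl i
    obtain ⟨q, hq⟩ := exists_walk_corner_corner_length_eq_two (a := b) (b := c) hac i k
    exact ⟨p.append q, by rw [Walk.length_append, hp, hq]; ring⟩

lemma dist_corner_corner_le {a c : Fin m} (hac : a < c) (i k : Fin 3) :
    (chainG m).dist (corner a i) (corner c k) ≤ 2 * ((c : ℕ) - a) := by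
  obtain ⟨n, hn⟩ := Nat.exists_eq_add_of_lt (Fin.lt_def.1 hac)
  obtain ⟨p, hp⟩ := exists_walk_corner_corner_length_eq (n := n) (by omega) i k
  have := dist_le p
  omega

end Chain

section SpanningTree

variable {m : ℕ} {T : SimpleGraph (ChainVertex m)}

lemma pos_le_pos_add_dist (hT : T ≤ chainG m) (hconn : T.Connected) (u v : ChainVertex m) :
    v.pos ≤ u.pos + T.dist u v :=
  le_add_dist_of_forall_adj_le_add_one (fun _ _ h => pos_le_pos_add_one (hT h)) hconn u v

lemma dist_eq_add_dist_inl (hT : T ≤ chainG m) (hconn : T.Connected) {u v : ChainVertex m}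
    {k : Fin (m + 1)} (hu : u.pos ≤ 2 * k) (hv : 2 * k ≤ v.pos) :
    T.dist u v = T.dist u (.inl k) + T.dist (.inl k) v := by
  refine dist_eq_add_dist_of_forall_mem_support hconn fun p => ?_
  obtain ⟨x, hx, hpos⟩ := exists_mem_support_eq_of_forall_adj_le_add_one
    (fun _ _ h => pos_le_pos_add_one (hT h)) p hu hv
  exact eq_inl_of_pos_eq hpos ▸ hx

lemma dist_corner_corner_eq (hT : T ≤ chainG m) (hconn : T.Connected) {a b c : Fin m}
    (hab : a < b) (hbc : b < c) (i k : Fin 3) :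
    T.dist (corner a i) (corner c k) =
      T.dist (corner a i) (exit a) + (T.dist (exit a) (entry b) + (T.dist (entry b) (exit b) +
        (T.dist (exit b) (entry c) + T.dist (entry c) (corner c k)))) := by
  rw [Fin.lt_def] at hab hbc
  rw [dist_eq_add_dist_inl hT hconn (u := corner a i) (k := a.succ),
    dist_eq_add_dist_inl hT hconn (u := exit a) (k := b.castSucc),
    dist_eq_add_dist_inl hT hconn (u := entry b) (k := b.succ),
    dist_eq_add_dist_inl hT hconn (u := exit b) (k := c.castSucc)]
  all_goals simp only [pos, Fin.val_castSucc, Fin.val_succ]; omega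

lemma two_mul_sub_add_surplus_le_dist (hT : T ≤ chainG m) (hconn : T.Connected) {a b c : Fin m}
    (hab : a < b) (hbc : b < c) (i k : Fin 3) :
    2 * ((c : ℕ) - a) + ((T.dist (corner a i) (exit a) - 1) + (T.dist (entry b) (exit b) - 2) +
      (T.dist (entry c) (corner c k) - 1)) ≤ T.dist (corner a i) (corner c k) := by
  have hsplit := dist_corner_corner_eq hT hconn hab hbc i k
  have ha := pos_le_pos_add_dist hT hconn (corner a i) (exit a)
  have hab' := pos_le_pos_add_dist hT hconn (exit a) (entry b)
  have hb := pos_le_pos_add_dist hT hconn (entry b) (exit b)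
  have hbc' := pos_le_pos_add_dist hT hconn (exit b) (entry c)
  have hc := pos_le_pos_add_dist hT hconn (entry c) (corner c k)
  simp only [pos, Fin.val_castSucc, Fin.val_succ] at ha hab' hb hbc' hc
  omega

lemma two_le_dist_entry_exit (hT : T ≤ chainG m) (hconn : T.Connected) (g : Fin m) :
    2 ≤ T.dist (entry g) (exit g) := by
  have := pos_le_pos_add_dist hT hconn (entry g) (exit g)
  simp only [pos, Fin.val_castSucc, Fin.val_succ] at this
  omega

lemma exists_corner_notMem_commonNeighbors {T₁ T₂ : SimpleGraph (ChainVertex m)}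
    (hT₁ : T₁.IsAcyclic) (hT₂ : T₂.IsAcyclic) (g : Fin m) :
    ∃ i, corner g i ∉ T₁.commonNeighbors (entry g) (exit g) ∧
      corner g i ∉ T₂.commonNeighbors (entry g) (exit g) := by
  have corner_injective : Function.Injective (corner g) := fun i j h => by simpa using h
  have subsingleton {T : SimpleGraph (ChainVertex m)} (hT : T.IsAcyclic) :
      (corner g ⁻¹' T.commonNeighbors (entry g) (exit g)).Subsingleton :=
    (commonNeighbors_subsingleton_of_isAcyclic hT (entry_ne_exit g)).preimage corner_injective
  exact exists_notMem_notMem_of_subsingleton (by simp) (subsingleton hT₁) (subsingleton hT₂)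

/-- The type of gadget `g`, marked at its `i`-th corner, in `T`: whether `T` joins the ends
of `g` by a shortest possible path (types `0, 1, 2`) or not (types `3, 4`), refined by the surplus
`p - 1` of the distance `p` from the entry to the marked vertex. The surplus is truncated at the
total of `p - 1` and `q - 1` that is guaranteed for a vertex off the paths of length two, `q` being
its distance to the exit. -/
noncomputable def gadgetType (T : SimpleGraph (ChainVertex m)) (g : Fin m) (i : Fin 3) : Fin 5 :=
  ⟨if T.dist (entry g) (exit g) = 2 then min (T.dist (entry g) (corner g i) - 1) 2
    else 3 + min (T.dist (entry g) (corner g i) - 1) 1, by split_ifs <;> omega⟩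

lemma two_mul_sub_add_one_lt_dist_of_gadgetType_eq (hle : T ≤ chainG m) (hT : T.IsTree)
    {a b c : Fin m} (hab : a < b) (hbc : b < c) {i j k : Fin 3}
    (hi : corner a i ∉ T.commonNeighbors (entry a) (exit a))
    (htype_ab : gadgetType T a i = gadgetType T b j)
    (htype_bc : gadgetType T b j = gadgetType T c k) :
    2 * ((c : ℕ) - a) + 1 < T.dist (corner a i) (corner c k) := by
  have hsurplus := two_mul_sub_add_surplus_le_dist hle hT.connected hab hbc i k
  have hb := two_le_dist_entry_exit hle hT.connected b
  have hthree : 3 ≤ T.dist (entry a) (corner a i) + T.dist (corner a i) (exit a) :=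
    three_le_dist_add_dist_of_notMem_commonNeighbors hT.connected Sum.inl_ne_inr Sum.inr_ne_inl hi
  have hfour (ha : T.dist (entry a) (exit a) = 2) :
      4 ≤ T.dist (entry a) (corner a i) + T.dist (corner a i) (exit a) :=
    four_le_dist_add_dist_of_notMem_commonNeighbors hT.connected hT.isAcyclic.isBipartite
      Sum.inl_ne_inr Sum.inr_ne_inl hi (ha ▸ even_two)
  simp only [gadgetType, Fin.mk.injEq] at htype_ab htype_bc
  split_ifs at htype_ab htype_bc <;> omega

end SpanningTree

end chainG

open chainG

theorem stmt7_general {m : ℕ} (hm : 2 * 5 ^ 2 + 1 ≤ m) {T₁ T₂ : SimpleGraph (ChainVertex m)}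
    (hle₁ : T₁ ≤ chainG m) (hT₁ : T₁.IsTree) (hle₂ : T₂ ≤ chainG m) (hT₂ : T₂.IsTree) :
    ∃ u v : ChainVertex m,
      (chainG m).dist u v + 1 < T₁.dist u v ∧ (chainG m).dist u v + 1 < T₂.dist u v := by
  choose mark hmark₁ hmark₂ using
    exists_corner_notMem_commonNeighbors hT₁.isAcyclic hT₂.isAcyclic
  obtain ⟨a, b, c, hab, hbc, htype_ab, htype_bc⟩ := exists_lt_lt_map_eq_of_two_mul_card_lt_card
    (fun g => (gadgetType T₁ g (mark g), gadgetType T₂ g (mark g))) (by simp; omega)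
  rw [Prod.mk.injEq] at htype_ab htype_bc
  have hdist := dist_corner_corner_le (hab.trans hbc) (mark a) (mark c)
  have hfar₁ := two_mul_sub_add_one_lt_dist_of_gadgetType_eq hle₁ hT₁ hab hbc (hmark₁ a)
    htype_ab.1 htype_bc.1
  have hfar₂ := two_mul_sub_add_one_lt_dist_of_gadgetType_eq hle₂ hT₂ hab hbc (hmark₂ a)
    htype_ab.2 htype_bc.2
  exact ⟨corner a (mark a), corner c (mark c), by omega, by omega⟩

/-- If the chain has at least 2·5³+1 gadgets, no two spanning trees collectively
1-span it: some pair of vertices is badly approximated by both trees. -/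
theorem stmt7 :
    ∀ m : ℕ, 2 * 5 ^ 3 + 1 ≤ m →
    ∀ T₁ T₂ : SimpleGraph (Fin (m + 1) ⊕ Fin m × Fin 3),
      T₁ ≤ chainG m → T₁.Connected → T₁.IsAcyclic →
      T₂ ≤ chainG m → T₂.Connected → T₂.IsAcyclic →
      ∃ u v : Fin (m + 1) ⊕ Fin m × Fin 3,
        (chainG m).dist u v + 1 < T₁.dist u v ∧
        (chainG m).dist u v + 1 < T₂.dist u v := by
  intro m hm T₁ T₂ hle₁ hconn₁ hacyc₁ hle₂ hconn₂ hacyc₂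
  exact stmt7_general (by omega) hle₁ ⟨hconn₁, hacyc₁⟩ hle₂ ⟨hconn₂, hacyc₂⟩
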